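/- Let (k,′) be a differential field of characteristic zero, α, β ∈ kˣ, and Q = (α,β)_k. For every derivation d on Q restricting to ′ on k, there exists a differential field extension (L,′) of (k,′) with transcendence degree at most 3 over k such that (Q,d) is split by (L,′). -/

import Mathlib

open scoped TensorProduct

/-- A derivation on a (possibly noncommutative) ring: an additive map satisfying the
Leibniz rule. -/
structure IsRingDeriv {A : Type*} [Ring A] (d : A → A) : Prop where
  map_add : ∀ x y, d (x + y) = d x + d y
  leibniz : ∀ x y, d (x * y) = d x * y + x * d y

/-- The derivation `d` on the `k`-algebra `A` restricts to the derivation `δ` on `k`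
(along `algebraMap k A`). -/
def RestrictsTo {k A : Type*} [CommRing k] [Ring A] [Algebra k A]
    (δ : k → k) (d : A → A) : Prop :=
  ∀ c : k, d (algebraMap k A c) = algebraMap k A (δ c)

/-- The differential algebra `(Q, d)` over `(k, δk)` is split by the differential field
`(L, δL)`: there is an `L`-algebra isomorphism `L ⊗[k] Q ≃ M₂(L)` intertwining the
induced derivation `d* = δL ⊗ id + id ⊗ d` with the coordinate-wise derivation on `M₂(L)`. -/
def DiffSplits (k : Type*) [Field k] (Q : Type*) [Ring Q] [Algebra k Q]
    (d : Q → Q) (L : Type*) [Field L] [Algebra k L] (δL : L → L) : Prop :=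
  ∃ D : L ⊗[k] Q → L ⊗[k] Q,
    IsRingDeriv D ∧
    (∀ (y : L) (x : Q), D (y ⊗ₜ[k] x) = δL y ⊗ₜ[k] x + y ⊗ₜ[k] d x) ∧
    ∃ φ : (L ⊗[k] Q) ≃ₐ[L] Matrix (Fin 2) (Fin 2) L,
      ∀ z, φ (D z) = (φ z).map δL

/-- The transcendence degree of `L` over `k` is at least `n`: there are `n` algebraically
independent elements. -/
def TrdegGE (k L : Type*) [CommRing k] [CommRing L] [Algebra k L] (n : ℕ) : Prop :=
  ∃ f : Fin n → L, AlgebraicIndependent k f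

/-- The transcendence degree of `L` over `k` is at most `n`: there is no algebraically
independent family of `n + 1` elements. -/
def TrdegLE (k L : Type*) [CommRing k] [CommRing L] [Algebra k L] (n : ℕ) : Prop :=
  ∀ f : Fin (n + 1) → L, ¬ AlgebraicIndependent k f

universe u

open Polynomial

theorem IsRingDeriv.zero' {A : Type*} [Ring A] {d : A → A} (h : IsRingDeriv d) : d 0 = 0 := by
  have := h.map_add 0 0
  simpa using this

theorem IsRingDeriv.one' {A : Type*} [Ring A] {d : A → A} (h : IsRingDeriv d) : d 1 = 0 := by
  have := h.leibniz 1 1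
  simpa using this

theorem IsRingDeriv.neg' {A : Type*} [Ring A] {d : A → A} (h : IsRingDeriv d) (x : A) :
    d (-x) = - d x := by
  have := h.map_add x (-x)
  rw [add_neg_cancel, h.zero'] at this
  exact (neg_eq_of_add_eq_zero_right this.symm).symm

/-- The `Differential` structure attached to a derivation. -/
@[reducible] def IsRingDeriv.toDifferential {A : Type*} [CommRing A] {d : A → A}
    (h : IsRingDeriv d) : Differential A :=
  ⟨Derivation.mk' (AddMonoidHom.mk' d h.map_add).toIntLinearMap (by
    intro a b
    simp [h.leibniz]; ring)⟩

/-- Extension of a derivation to the fraction field. -/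
theorem exists_fraction_deriv {R L : Type*} [CommRing R] [IsDomain R] [Field L] [Algebra R L]
    [IsFractionRing R L] (δ : R → R) (hδ : IsRingDeriv δ) :
    ∃ δL : L → L, IsRingDeriv δL ∧ RestrictsTo δ δL := by
  have sm : ∀ (r : R) (x : L), r • x = algebraMap R L r * x := fun r x => Algebra.smul_def r x
  let f : R →+* TrivSqZeroExt L L :=
    { toFun := fun r => TrivSqZeroExt.inl (algebraMap R L r) +
        TrivSqZeroExt.inr (algebraMap R L (δ r))
      map_one' := by ext <;> simp [hδ.one']
      map_zero' := by ext <;> simp [hδ.zero']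
      map_mul' := by
        intro x y
        ext
        · simp
        · simp [hδ.leibniz, sm]; ring
      map_add' := by
        intro x y
        ext <;> simp [hδ.map_add, sm] }
  have hf : ∀ y : nonZeroDivisors R, IsUnit (f y) := by
    intro y
    rw [TrivSqZeroExt.isUnit_iff_isUnit_fst]
    simp [f]
  let g : L →+* TrivSqZeroExt L L := IsLocalization.lift hf
  have hg : ∀ r, g (algebraMap R L r) = f r := fun r => IsLocalization.lift_eq hf r
  have hfst : ∀ x, (g x).fst = x := by
    have : (TrivSqZeroExt.fstHom L L L).toRingHom.comp g = RingHom.id L := by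
      apply IsLocalization.ringHom_ext (nonZeroDivisors R)
      ext r
      simp [hg, f]
    intro x
    exact congrArg (fun h : L →+* L => h x) this
  refine ⟨fun x => (g x).snd, ⟨fun x y => by simp, fun x y => ?_⟩, fun r => ?_⟩
  · simp [hfst]; ring
  · simp [hg, f, sm]

theorem exists_step (K : Type u) [Field K] (δ : K → K) (hδ : IsRingDeriv δ) (p : K[X]) :
    ∃ (L : Type u) (_ : Field L) (_ : Algebra K L) (δL : L → L),
      IsRingDeriv δL ∧ RestrictsTo δ δL ∧ Algebra.trdeg K L ≤ 1 ∧
      ∃ t : L, δL t = aeval t p ∧ t ≠ 0 := by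
  let := hδ.toDifferential
  let D := Differential.implicitDeriv p
  have hD : IsRingDeriv (fun q => D q) :=
    ⟨fun x y => map_add D x y, fun x y => by
      simp only [Derivation.leibniz, smul_eq_mul]; ring⟩
  obtain ⟨δL, h1, h2⟩ := exists_fraction_deriv (L := FractionRing K[X]) _ hD
  refine ⟨FractionRing K[X], inferInstance, inferInstance, δL, h1, ?_, ?_,
    algebraMap K[X] _ X, ?_, ?_⟩
  · intro c
    have := h2 (C c)
    simp only [D, Differential.implicitDeriv_C] at this
    exact this
  · have : Algebra.IsAlgebraic K[X] (FractionRing K[X]) :=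
      IsLocalization.isAlgebraic _ (nonZeroDivisors K[X])
    rw [← trdeg_add_eq K K[X] (A := FractionRing K[X]), _root_.Polynomial.trdeg_of_isDomain, 
      _root_.trdeg_eq_zero, add_zero]
  · rw [h2, aeval_algebraMap_apply]
    simp [D]
  · simp

theorem exists_sqrt (K : Type u) [Field K] [CharZero K] (δ : K → K) (hδ : IsRingDeriv δ) (a : K) :
    ∃ (L : Type u) (_ : Field L) (_ : Algebra K L) (δL : L → L),
      IsRingDeriv δL ∧ RestrictsTo δ δL ∧ Algebra.trdeg K L ≤ 0 ∧
      ∃ t : L, t * t = algebraMap K L a := by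
  let := hδ.toDifferential
  let L := (X ^ 2 - C a : K[X]).SplittingField
  let : Differential L := Differential.differentialFiniteDimensional K L
  have : DifferentialAlgebra K L := Differential.differentialAlgebraFiniteDimensional
  refine ⟨L, inferInstance, inferInstance, fun x => Differential.deriv x,
    ⟨fun x y => map_add _ x y, fun x y => by
      simp only [Derivation.leibniz, smul_eq_mul]; ring⟩, ?_, ?_, ?_⟩
  · intro c
    exact DifferentialAlgebra.deriv_algebraMap c
  · rw [_root_.trdeg_eq_zero]
  · have hs := SplittingField.splits (X ^ 2 - C a : K[X])
    have hdeg : ((X ^ 2 - C a : K[X]).map (algebraMap K L)).degree ≠ 0 := by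
      rw [degree_map, degree_X_pow_sub_C (by norm_num)]; norm_num
    obtain ⟨t, ht⟩ := hs.exists_eval_eq_zero hdeg
    refine ⟨t, ?_⟩
    simp [sub_eq_zero] at ht
    exact (sq t).symm.trans ht

theorem exists_quat_hom {k A Q : Type*} [Field k] [Ring Q] [Algebra k Q] [Ring A] [Algebra k A]
    {α β : k} {u v : Q} (hu : u * u = algebraMap k Q α) (hv : v * v = algebraMap k Q β)
    (huv : v * u = -(u * v))
    (bQ : Module.Basis (Fin 4) k Q) (hbQ : ⇑bQ = ![1, u, v, u * v])
    (U V : A) (hU : U * U = algebraMap k A α) (hV : V * V = algebraMap k A β)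
    (hUV : V * U = -(U * V)) :
    ∃ φ : Q →ₐ[k] A, φ u = U ∧ φ v = V := by
  let f : Q →ₗ[k] A := bQ.constr k ![1, U, V, U * V]
  have hf : ∀ i, f (![1, u, v, u * v] i) = ![1, U, V, U * V] i := by
    intro i
    rw [← hbQ]
    simp [f]
  have f0 : f 1 = 1 := hf 0
  have f1 : f u = U := hf 1
  have f2 : f v = V := hf 2
  have f3 : f (u * v) = U * V := hf 3
  rw [Algebra.algebraMap_eq_smul_one] at hu hv hU hV
  have e1 : u * (u * v) = α • v := by rw [← mul_assoc, hu]; simp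
  have e2 : (u * v) * u = - (α • v) := by rw [mul_assoc, huv, mul_neg, e1]
  have e3 : (u * v) * v = β • u := by rw [mul_assoc, hv]; simp
  have e4 : v * (u * v) = - (β • u) := by rw [← mul_assoc, huv, neg_mul, e3]
  have e5 : (u * v) * (u * v) = -((α * β) • 1) := by
    rw [← mul_assoc, e2, neg_mul, smul_mul_assoc, hv, smul_smul]
  have E1 : U * (U * V) = α • V := by rw [← mul_assoc, hU]; simp
  have E2 : (U * V) * U = - (α • V) := by rw [mul_assoc, hUV, mul_neg, E1]
  have E3 : (U * V) * V = β • U := by rw [mul_assoc, hV]; simp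
  have E4 : V * (U * V) = - (β • U) := by rw [← mul_assoc, hUV, neg_mul, E3]
  have E5 : (U * V) * (U * V) = -((α * β) • 1) := by
    rw [← mul_assoc, E2, neg_mul, smul_mul_assoc, hV, smul_smul]
  have key : (LinearMap.mul k Q).compr₂ f = (LinearMap.mul k A).compl₁₂ f f := by
    refine bQ.ext fun i => bQ.ext fun j => ?_
    rw [hbQ]
    fin_cases i <;> fin_cases j <;>
      simp [f0, f1, f2, f3, hu, hv, huv, e1, e2, e3, e4, e5, hU, hV, hUV, E1, E2, E3, E4, E5]
  refine ⟨AlgHom.ofLinearMap f f0 fun x y => ?_, f1, f2⟩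
  exact congrArg (fun g => g x y) key

theorem quat_indep {L A : Type*} [Field L] [CharZero L] [Ring A] [Nontrivial A] [Algebra L A]
    {α β : L} (hα : α ≠ 0) (hβ : β ≠ 0)
    (U V : A) (hU : U * U = algebraMap L A α) (hV : V * V = algebraMap L A β)
    (hUV : V * U = -(U * V)) :
    LinearIndependent L ![1, U, V, U * V] := by
  rw [Algebra.algebraMap_eq_smul_one] at hU hV
  have E1 : U * (U * V) = α • V := by rw [← mul_assoc, hU]; simp
  have E2 : (U * V) * U = - (α • V) := by rw [mul_assoc, hUV, mul_neg, E1]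
  have E3 : (U * V) * V = β • U := by rw [mul_assoc, hV]; simp
  have E4 : V * (U * V) = - (β • U) := by rw [← mul_assoc, hUV, neg_mul, E3]
  have two : (2 : L) ≠ 0 := two_ne_zero
  have aux : ∀ a b : L, a • (1 : A) + b • U = 0 → a = 0 ∧ b = 0 := by
    intro a b h
    have h2 : V * (a • (1 : A) + b • U) * V = 0 := by rw [h]; simp
    have h3 : (a * β) • (1 : A) - (b * β) • U = 0 := by
      rw [← h2]
      simp only [mul_add, add_mul, mul_smul_comm, smul_mul_assoc, mul_one, hUV, neg_mul, E3, hV,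
        smul_smul, smul_neg]
      abel
    have h4 : (2 * a * β) • (1 : A) = 0 := by
      have : (2 * a * β) • (1 : A) = β • (a • (1 : A) + b • U) + 
        ((a * β) • (1 : A) - (b * β) • U) := by module
      rw [this, h, h3]; simp
    have ha : a = 0 := by
      have := (smul_eq_zero.mp h4).resolve_right one_ne_zero
      simpa [hβ] using this
    subst ha
    refine ⟨rfl, ?_⟩
    have h5 : (b * α) • (1 : A) = 0 := by
      have : U * ((0 : L) • (1 : A) + b • U) = 0 := by rw [h]; simp
      simpa [hU, smul_smul] using this
    have := (smul_eq_zero.mp h5).resolve_right one_ne_zero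
    simpa [hα] using this
  rw [Fintype.linearIndependent_iff]
  intro g hg
  simp only [Fin.sum_univ_four, Matrix.cons_val] at hg
  have h1 : U * (g 0 • 1 + g 1 • U + g 2 • V + g 3 • (U * V)) * U = 0 := by rw [hg]; simp
  have h2 : α • (g 0 • 1 + g 1 • U) - α • (g 2 • V + g 3 • (U * V)) = 0 := by
    rw [← h1]
    simp only [mul_add, add_mul, mul_smul_comm, smul_mul_assoc, mul_one, hU, E1, E2, hUV,
      one_mul, smul_neg, smul_add]
    module
  have h3 : g 0 • 1 + g 1 • U = 0 := by
    have : (2 * α) • (g 0 • 1 + g 1 • U) = 0 := by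
      have : (2 * α) • (g 0 • 1 + g 1 • U) = α • (g 0 • 1 + g 1 • U + g 2 • V + g 3 • (U * V)) +
        (α • (g 0 • 1 + g 1 • U) - α • (g 2 • V + g 3 • (U * V))) := by module
      rw [this, hg, h2]; simp
    exact (smul_eq_zero.mp this).resolve_left (by simp [hα])
  have h4 : g 2 • V + g 3 • (U * V) = 0 := by
    rw [h3] at hg; simpa using hg
  have h5 : g 2 • 1 + g 3 • U = 0 := by
    have : (g 2 • V + g 3 • (U * V)) * V = 0 := by rw [h4]; simp
    have h6 : β • (g 2 • 1 + g 3 • U) = 0 := by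
      rw [← this]
      simp only [add_mul, smul_mul_assoc, hV, E3]
      module
    exact (smul_eq_zero.mp h6).resolve_left hβ
  obtain ⟨p0, p1⟩ := aux _ _ h3
  obtain ⟨p2, p3⟩ := aux _ _ h5
  intro i
  fin_cases i <;> simp [p0, p1, p2, p3]

theorem map_deriv {L : Type*} [Field L] {δ : L → L} (hδ : IsRingDeriv δ) :
    IsRingDeriv (fun M : Matrix (Fin 2) (Fin 2) L => M.map δ) := by
  refine ⟨fun x y => ?_, fun x y => ?_⟩
  · ext i j; simp [hδ.map_add]
  · ext i j
    simp [Matrix.mul_apply, Fin.sum_univ_two, hδ.map_add, hδ.leibniz]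
    ring

theorem diffSplits_of {k : Type*} [Field k] [CharZero k]
    {δk : k → k} {α β : k} (hα : α ≠ 0) (hβ : β ≠ 0)
    {Q : Type*} [Ring Q] [Algebra k Q]
    {u v : Q} (hu : u * u = algebraMap k Q α) (hv : v * v = algebraMap k Q β)
    (bQ : Module.Basis (Fin 4) k Q) (hbQ : ⇑bQ = ![1, u, v, u * v])
    (huv : v * u = -(u * v))
    {d : Q → Q} (hd : IsRingDeriv d) (hdk : RestrictsTo δk d)
    {L : Type*} [Field L] [Algebra k L] {δL : L → L} (hδL : IsRingDeriv δL)
    (hδkL : RestrictsTo δk δL)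
    (φ : Q →ₐ[k] Matrix (Fin 2) (Fin 2) L)
    (h1 : φ (d u) = (φ u).map δL) (h2 : φ (d v) = (φ v).map δL) :
    DiffSplits k Q d L δL := by
  have hM := map_deriv hδL
  have : CharZero L := charZero_of_injective_algebraMap (algebraMap k L).injective
  have hφ : ∀ x, φ (d x) = (φ x).map δL := by
    have hsm : ∀ (c : k) x, φ (d x) = (φ x).map δL → φ (d (c • x)) = (φ (c • x)).map δL := by
      intro c x hx
      rw [Algebra.smul_def, hd.leibniz, hdk, map_mul, hM.leibniz, map_add, map_mul, map_mul, hx,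
        AlgHom.commutes, AlgHom.commutes]
      congr 2
      ext i j
      simp only [Matrix.algebraMap_matrix_apply, Matrix.map_apply]
      split_ifs
      · exact (hδkL c).symm
      · exact hδL.zero'.symm
    have hb : ∀ i, φ (d (bQ i)) = (φ (bQ i)).map δL := by
      rw [hbQ]
      intro i
      fin_cases i
      · have := hM.one'
        simp [hd.one', this]
      · exact h1
      · exact h2
      · simp only [Fin.reduceFinMk, Matrix.cons_val]
        rw [hd.leibniz, map_mul, hM.leibniz, map_add, map_mul, map_mul, h1, h2]
    intro x
    have hx : x ∈ Submodule.span k (Set.range bQ) := by rw [bQ.span_eq]; trivial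
    induction hx using Submodule.span_induction with
    | mem x hx => obtain ⟨i, rfl⟩ := hx; exact hb i
    | zero =>
      have := hM.zero'
      simp only [map_zero, hd.zero']
      exact this.symm
    | add x y _ _ hx hy => rw [hd.map_add, map_add, map_add, hM.map_add, hx, hy]
    | smul c x _ hx => exact hsm c x hx
  let ψ : L ⊗[k] Q →ₐ[L] Matrix (Fin 2) (Fin 2) L :=
    Algebra.TensorProduct.lift (Algebra.ofId L _) φ (fun x y => Algebra.commutes x _)
  have hψ : ∀ y x, ψ (y ⊗ₜ x) = y • φ x := by
    intro y x
    rw [Algebra.smul_def]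
    exact Algebra.TensorProduct.lift_tmul _ _ _ _ _
  have hinj : LinearIndependent L ![1, φ u, φ v, φ u * φ v] := by
    refine quat_indep (α := algebraMap k L α) (β := algebraMap k L β) (by simpa) (by simpa)
      _ _ ?_ ?_ ?_
    · rw [← map_mul, hu, AlgHom.commutes]; rfl
    · rw [← map_mul, hv, AlgHom.commutes]; rfl
    · rw [← map_mul, huv, map_neg, map_mul]
  let bL := bQ.baseChange L
  have hbL : ψ.toLinearMap ∘ bL = ![1, φ u, φ v, φ u * φ v] := by
    funext i
    simp only [bL, Function.comp, Module.Basis.baseChange_apply, AlgHom.toLinearMap_apply, hψ, hbQ]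
    fin_cases i <;> simp
  have hbij : Function.Injective ψ.toLinearMap := by
    rw [← LinearMap.ker_eq_bot]
    refine LinearMap.ker_eq_bot_of_injective ?_
    have : ψ.toLinearMap = bL.constr L (ψ.toLinearMap ∘ bL) := by
      refine bL.ext fun i => by simp
    rw [this]
    exact bL.injective_constr_of_linearIndependent (hbL ▸ hinj)
  have hfin : FiniteDimensional L (L ⊗[k] Q) := Module.Finite.of_basis bL
  have hdim : Module.finrank L (L ⊗[k] Q) = Module.finrank L (Matrix (Fin 2) (Fin 2) L) := by
    rw [Module.finrank_eq_card_basis bL, Module.finrank_matrix]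
    simp
  have hsurj : Function.Surjective ψ.toLinearMap :=
    (LinearMap.injective_iff_surjective_of_finrank_eq_finrank hdim).mp hbij
  let e : (L ⊗[k] Q) ≃ₐ[L] Matrix (Fin 2) (Fin 2) L := AlgEquiv.ofBijective ψ ⟨hbij, hsurj⟩
  have he : ∀ y x, e (y ⊗ₜ x) = y • φ x := hψ
  refine ⟨fun z => e.symm ((e z).map δL), ⟨fun x y => ?_, fun x y => ?_⟩, fun y x => ?_, e,
    fun z => by simp⟩
  · rw [map_add, hM.map_add, map_add]
  · rw [map_mul, hM.leibniz, map_add, map_mul, map_mul]; simp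
  · rw [AlgEquiv.symm_apply_eq, map_add, he, he, he, hφ]
    ext i j
    simp [hδL.leibniz]

theorem restrictsTo_trans {K F L : Type*} [Field K] [Field F] [Field L] [Algebra K F]
    [Algebra F L] [Algebra K L] [IsScalarTower K F L] {δ : K → K} {δF : F → F} {δL : L → L}
    (h1 : RestrictsTo δ δF) (h2 : RestrictsTo δF δL) : RestrictsTo δ δL := by
  intro c
  rw [IsScalarTower.algebraMap_apply K F L, h2, h1, ← IsScalarTower.algebraMap_apply K F L]

theorem trdeg_trans {K F L : Type u} [Field K] [Field F] [Field L] [Algebra K F]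
    [Algebra F L] [Algebra K L] [IsScalarTower K F L] {m n : Cardinal.{u}}
    (h1 : Algebra.trdeg K F ≤ m) (h2 : Algebra.trdeg F L ≤ n) : Algebra.trdeg K L ≤ m + n := by
  rw [← trdeg_add_eq K F (A := L)]
  exact add_le_add h1 h2

theorem exists_solve (K : Type u) [Field K] (δ : K → K) (hδ : IsRingDeriv δ) (p q r t : K) :
    ∃ (L : Type u) (_ : Field L) (_ : Algebra K L) (δL : L → L),
      IsRingDeriv δL ∧ RestrictsTo δ δL ∧ Algebra.trdeg K L ≤ 1 + (1 + 1) ∧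
      ∃ x y z : L, z ≠ 0 ∧
        δL y = algebraMap K L r + (algebraMap K L t - algebraMap K L p) * y
          - algebraMap K L q * y ^ 2 ∧
        δL z = (algebraMap K L t - algebraMap K L p - 2 * algebraMap K L q * y) * z ∧
        δL x = algebraMap K L q * z := by
  obtain ⟨K1, _, _, δ1, h1, r1, t1, y, hy, -⟩ :=
    exists_step K δ hδ (C r + (C t - C p) * X - C q * X ^ 2)
  obtain ⟨K2, _, _, δ2, h2, r2, t2, z, hz, hz0⟩ := exists_step K1 δ1 h1
    (C (algebraMap K K1 t - algebraMap K K1 p - 2 * algebraMap K K1 q * y) * X)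
  let A02 : Algebra K K2 := ((algebraMap K1 K2).comp (algebraMap K K1)).toAlgebra
  have T02 : IsScalarTower K K1 K2 := IsScalarTower.of_algebraMap_eq' rfl
  obtain ⟨L, _, _, δL, h3, r3, t3, x, hx, -⟩ := exists_step K2 δ2 h2
    (C (algebraMap K K2 q * z))
  let A13 : Algebra K1 L := ((algebraMap K2 L).comp (algebraMap K1 K2)).toAlgebra
  have T13 : IsScalarTower K1 K2 L := IsScalarTower.of_algebraMap_eq' rfl
  let A03 : Algebra K L := ((algebraMap K2 L).comp (algebraMap K K2)).toAlgebra
  have T03 : IsScalarTower K K2 L := IsScalarTower.of_algebraMap_eq' rfl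
  have T03' : IsScalarTower K K1 L := IsScalarTower.of_algebraMap_eq' rfl
  have e1 : ∀ c : K, algebraMap K2 L (algebraMap K1 K2 (algebraMap K K1 c)) = algebraMap K L c :=
    fun c => rfl
  have e2 : ∀ c : K, algebraMap K2 L (algebraMap K K2 c) = algebraMap K L c :=
    fun c => rfl
  refine ⟨L, inferInstance, inferInstance, δL, h3, restrictsTo_trans r1 (restrictsTo_trans r2 r3),
    trdeg_trans t1 (trdeg_trans t2 t3), x, algebraMap K2 L (algebraMap K1 K2 y),
    algebraMap K2 L z, by simpa using hz0, ?_, ?_, ?_⟩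
  · rw [r3, r2, hy]
    simp [e1]
  · rw [r3, hz]
    have e3 : algebraMap K2 L (algebraMap K1 K2 2) = 2 := by rw [map_ofNat, map_ofNat]
    simp [e1, e3]
  · rw [hx]
    simp [e2]

theorem trdegLE_of {k L : Type u} [Field k] [Field L] [Algebra k L]
    (h : Algebra.trdeg k L ≤ 0 + (1 + (1 + 1))) : TrdegLE k L 3 := by
  intro f hf
  have h1 := hf.lift_cardinalMk_le_trdeg
  have h3 : Algebra.trdeg k L ≤ (3 : ℕ) := by
    refine h.trans (le_of_eq ?_)
    norm_num
  simp only [Cardinal.mk_fin, Cardinal.lift_natCast] at h1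
  rw [← Cardinal.lift_le.{0}] at h3
  have h4 := h1.trans (by simpa using h3)
  norm_cast at h4

theorem quat_deriv {k : Type*} [Field k] [CharZero k] {δk : k → k}
    {α β : k} (hα : α ≠ 0) (hβ : β ≠ 0)
    {Q : Type*} [Ring Q] [Algebra k Q]
    {u v : Q} (hu : u * u = algebraMap k Q α) (hv : v * v = algebraMap k Q β)
    (huv : v * u = -(u * v))
    (bQ : Module.Basis (Fin 4) k Q) (hbQ : ⇑bQ = ![1, u, v, u * v])
    {d : Q → Q} (hd : IsRingDeriv d) (hdk : RestrictsTo δk d) :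
    ∃ a2 a3 b1 b3 : k,
      d u = (δk α / (2 * α)) • u + a2 • v + a3 • (u * v) ∧
      d v = b1 • u + (δk β / (2 * β)) • v + b3 • (u * v) ∧
      a2 * β + b1 * α = 0 := by
  have hli := bQ.linearIndependent
  rw [hbQ, Fintype.linearIndependent_iff] at hli
  have lin : ∀ g0 g1 g2 g3 : k, g0 • (1 : Q) + g1 • u + g2 • v + g3 • (u * v) = 0 →
      g0 = 0 ∧ g1 = 0 ∧ g2 = 0 ∧ g3 = 0 := by
    intro g0 g1 g2 g3 h
    have := hli ![g0, g1, g2, g3] (by simpa [Fin.sum_univ_four] using h)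
    exact ⟨this 0, this 1, this 2, this 3⟩
  have span : ∀ x : Q, ∃ g0 g1 g2 g3 : k,
      x = g0 • (1 : Q) + g1 • u + g2 • v + g3 • (u * v) := by
    intro x
    refine ⟨bQ.repr x 0, bQ.repr x 1, bQ.repr x 2, bQ.repr x 3, ?_⟩
    conv_lhs => rw [← bQ.sum_repr x]
    simp [Fin.sum_univ_four, hbQ]
  obtain ⟨a0, a1, a2, a3, ha⟩ := span (d u)
  obtain ⟨b0, b1, b2, b3, hb⟩ := span (d v)
  have du := hd.leibniz u u
  have dv := hd.leibniz v v
  have duv := hd.leibniz u v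
  have dvu := hd.leibniz v u
  rw [hu, hdk] at du
  rw [hv, hdk] at dv
  rw [huv, hd.neg', duv] at dvu
  rw [Algebra.algebraMap_eq_smul_one] at hu hv du dv
  have e1 : u * (u * v) = α • v := by rw [← mul_assoc, hu]; simp
  have e2 : (u * v) * u = - (α • v) := by rw [mul_assoc, huv, mul_neg, e1]
  have e3 : (u * v) * v = β • u := by rw [mul_assoc, hv]; simp
  have e4 : v * (u * v) = - (β • u) := by rw [← mul_assoc, huv, neg_mul, e3]
  have two : (2 : k) ≠ 0 := two_ne_zero
  rw [ha] at du
  rw [hb] at dv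
  rw [ha, hb] at dvu
  simp only [mul_add, add_mul, mul_smul_comm, smul_mul_assoc, mul_one, one_mul, hu, hv, huv,
    e1, e2, e3, e4] at du dv dvu
  obtain ⟨p0, p1, -, -⟩ := lin (2 * a1 * α - δk α) (2 * a0) 0 0 (by
    have : (2 * a1 * α - δk α) • (1 : Q) + (2 * a0) • u + (0 : k) • v + (0 : k) • (u * v) =
      (2 * a1 * α) • (1 : Q) + (2 * a0) • u - δk α • 1 := by module
    rw [this, du]; module)
  obtain ⟨q0, -, q2, -⟩ := lin (2 * b2 * β - δk β) 0 (2 * b0) 0 (by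
    have : (2 * b2 * β - δk β) • (1 : Q) + (0 : k) • u + (2 * b0) • v + (0 : k) • (u * v) =
      (2 * b2 * β) • (1 : Q) + (2 * b0) • v - δk β • 1 := by module
    rw [this, dv]; module)
  have a00 : a0 = 0 := by simpa using p1
  have b00 : b0 = 0 := by simpa using q2
  have a11 : a1 = δk α / (2 * α) := by field_simp; linear_combination p0
  have b22 : b2 = δk β / (2 * β) := by field_simp; linear_combination q0
  subst a00 b00
  obtain ⟨r0, -, -, -⟩ := lin (2 * a2 * β + 2 * b1 * α) 0 0 0 (by
    rw [← sub_eq_zero] at dvu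
    rw [← neg_eq_zero, ← dvu]; module)
  refine ⟨a2, a3, b1, b3, ?_, ?_, ?_⟩
  · rw [ha, a11]; simp
  · rw [hb, b22]; simp
  · have : (2 : k) * (a2 * β + b1 * α) = 0 := by linear_combination r0
    simpa using this

theorem conj_deriv {A : Type*} [Ring A] {Δ : A → A} (hΔ : IsRingDeriv Δ) {G H M f : A}
    (h1 : G * H = 1) (h2 : H * G = 1) (hf : ∀ x, f * x = x * f) (hG : Δ G = M * G - f * G)
    (X : A) : Δ (H * X * G) = H * (Δ X + X * M - M * X) * G := by
  have hH : Δ H = - (H * (M - f)) := by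
    have h3 := hΔ.leibniz H G
    rw [h2, hΔ.one', hG] at h3
    have h4 : (Δ H * G + H * (M * G - f * G)) * H = 0 := by rw [← h3, zero_mul]
    have h5 : (Δ H * G + H * (M * G - f * G)) * H = (Δ H + H * (M - f)) * (G * H) := by
      noncomm_ring
    rw [h5, h1, mul_one] at h4
    exact eq_neg_of_add_eq_zero_left h4
  rw [hΔ.leibniz, hΔ.leibniz, hH, hG]
  have h6 : H * X * (f * G) = H * (f * X) * G := by rw [hf X]; noncomm_ring
  rw [mul_sub (H * X), h6]
  noncomm_ring

/-- Every differential quaternion algebra `(Q, d)` over a differential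
field `(k, ′)` of characteristic zero is split by a differential field extension of
transcendence degree at most `3` over `k`. -/
theorem stmt_5 (k : Type u) [Field k] [CharZero k]
    (δk : k → k) (hδk : IsRingDeriv δk)
    (α β : k) (hα : α ≠ 0) (hβ : β ≠ 0)
    (Q : Type u) [Ring Q] [Algebra k Q]
    (u v : Q) (hu : u * u = algebraMap k Q α) (hv : v * v = algebraMap k Q β)
    (huv : v * u = -(u * v))
    (bQ : Module.Basis (Fin 4) k Q) (hbQ : ⇑bQ = ![1, u, v, u * v])
    (d : Q → Q) (hd : IsRingDeriv d) (hdk : RestrictsTo δk d) :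
    ∃ (L : Type u) (_ : Field L) (_ : Algebra k L) (δL : L → L),
      IsRingDeriv δL ∧ RestrictsTo δk δL ∧ TrdegLE k L 3 ∧ DiffSplits k Q d L δL := by
  obtain ⟨a2, a3, b1, b3, hdu, hdv, hab⟩ := quat_deriv hα hβ hu hv huv bQ hbQ hd hdk
  obtain ⟨F, _, _, δF, hF, rF, tF, s, hs⟩ := exists_sqrt k δk hδk α
  have : CharZero F := charZero_of_injective_algebraMap (algebraMap k F).injective
  let c : k → F := algebraMap k F
  let m1 : F := -(c b3 - c (δk β) / (2 * c β * s)) / 2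
  let m2 : F := c a3 / 2
  let m3 : F := c a2 / (2 * c α)
  obtain ⟨L, _, _, δL, hL, rL, tL, x, y, z, hz0, hy, hz, hx⟩ := exists_solve F δF hF
    (m1 * s) (m2 * c β + m3 * s * c β) (m2 - m3 * s) (- (m1 * s))
  let A : Algebra k L := ((algebraMap F L).comp (algebraMap k F)).toAlgebra
  have T : IsScalarTower k F L := IsScalarTower.of_algebraMap_eq' rfl
  have rkL : RestrictsTo δk δL := restrictsTo_trans rF rL
  refine ⟨L, inferInstance, inferInstance, δL, hL, rkL,
    trdegLE_of (trdeg_trans tF tL), ?_⟩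
  have : CharZero L := charZero_of_injective_algebraMap (algebraMap k L).injective
  obtain ⟨σ, hσdef⟩ : ∃ σ : L, σ = algebraMap F L s := ⟨_, rfl⟩
  have hcc : ∀ e : k, algebraMap F L (c e) = algebraMap k L e := fun e => rfl
  have hσ : σ * σ = algebraMap k L α := by
    rw [hσdef, ← map_mul, hs]; rfl
  have hα' : algebraMap k L α ≠ 0 := by simpa
  have hβ' : algebraMap k L β ≠ 0 := by simpa
  have hσ0 : σ ≠ 0 := by
    rintro rfl
    simp at hσ
    exact hα' hσ.symm
  have hσd : 2 * σ * δL σ = algebraMap k L (δk α) := by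
    rw [← rkL, ← hσ, hL.leibniz]; ring
  simp only [m1, m2, m3, map_add, map_sub, map_neg, map_mul, map_div₀, map_ofNat, hcc,
    ← hσdef] at hy hz hx
  replace hab : algebraMap k L a2 * algebraMap k L β + algebraMap k L b1 * algebraMap k L α = 0 := by
    rw [← map_mul, ← map_mul, ← map_add, hab, map_zero]
  have hβd : δL (algebraMap k L β) = algebraMap k L (δk β) := rkL β
  let Δ : Matrix (Fin 2) (Fin 2) L → Matrix (Fin 2) (Fin 2) L := fun M => M.map δL
  have hΔ : IsRingDeriv Δ := map_deriv hL
  have algM : ∀ e : k, algebraMap k (Matrix (Fin 2) (Fin 2) L) e =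
      !![algebraMap k L e, 0; 0, algebraMap k L e] := by
    intro e
    ext i j
    fin_cases i <;> fin_cases j <;> simp [Matrix.algebraMap_matrix_apply]
  have smM : ∀ (e : k) (N : Matrix (Fin 2) (Fin 2) L), e • N = algebraMap k L e • N :=
    fun e N => by ext; simp [Algebra.smul_def]
  obtain ⟨A2, hA2⟩ : ∃ e, e = algebraMap k L a2 := ⟨_, rfl⟩
  obtain ⟨A3, hA3⟩ : ∃ e, e = algebraMap k L a3 := ⟨_, rfl⟩
  obtain ⟨B1, hB1⟩ : ∃ e, e = algebraMap k L b1 := ⟨_, rfl⟩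
  obtain ⟨B3, hB3⟩ : ∃ e, e = algebraMap k L b3 := ⟨_, rfl⟩
  obtain ⟨b, hb⟩ : ∃ e, e = algebraMap k L β := ⟨_, rfl⟩
  obtain ⟨b', hb'⟩ : ∃ e, e = algebraMap k L (δk β) := ⟨_, rfl⟩
  rw [← hA2, ← hB1, ← hb, ← hσ] at hab
  rw [← hb, ← hb'] at hβd
  rw [← hb] at hβ'
  simp only [← hA2, ← hA3, ← hB3, ← hb, ← hb', ← hσ] at hx hy hz
  obtain ⟨n1, hn1⟩ : ∃ e, e = -(B3 - b' / (2 * b * σ)) / 2 := ⟨_, rfl⟩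
  obtain ⟨n2, hn2⟩ : ∃ e, e = A3 / 2 := ⟨_, rfl⟩
  obtain ⟨n3, hn3⟩ : ∃ e, e = A2 / (2 * (σ * σ)) := ⟨_, rfl⟩
  simp only [← hn1, ← hn2, ← hn3] at hx hy hz
  let U0 : Matrix (Fin 2) (Fin 2) L := !![σ, 0; 0, -σ]
  let V0 : Matrix (Fin 2) (Fin 2) L := !![0, b; 1, 0]
  let M : Matrix (Fin 2) (Fin 2) L := !![n1 * σ, n2 * b + n3 * σ * b; n2 - n3 * σ, -(n1 * σ)]
  let G : Matrix (Fin 2) (Fin 2) L := !![1, x; y, y * x + z]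
  let H : Matrix (Fin 2) (Fin 2) L := !![(y * x + z) / z, -x / z; -y / z, 1 / z]
  let f : L := n1 * σ + (n2 * b + n3 * σ * b) * y
  have hGH : G * H = 1 := by
    ext i j
    fin_cases i <;> fin_cases j <;> simp [G, H] <;> field_simp <;> ring
  have hHG : H * G = 1 := by
    ext i j
    fin_cases i <;> fin_cases j <;> simp [G, H] <;> field_simp <;> ring
  have hdG : Δ G = M * G - (algebraMap L _ f) * G := by
    ext i j
    fin_cases i <;> fin_cases j <;>
      simp [Δ, G, M, f, hL.one', hL.map_add, hL.leibniz, hx, hy, hz, Matrix.mul_apply,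
        Matrix.algebraMap_matrix_apply, Fin.sum_univ_two] <;> ring
  have hconj := conj_deriv hΔ hGH hHG (fun X => Algebra.commutes f X) hdG
  have hU0 : U0 * U0 = algebraMap k _ α := by
    rw [algM, ← hσ]
    ext i j
    fin_cases i <;> fin_cases j <;> simp [U0]
  have hV0 : V0 * V0 = algebraMap k _ β := by
    rw [algM, ← hb]
    ext i j
    fin_cases i <;> fin_cases j <;> simp [V0]
  have hUV0 : V0 * U0 = -(U0 * V0) := by
    ext i j
    fin_cases i <;> fin_cases j <;> simp [U0, V0, mul_comm]
  have hmul : ∀ X Y, (H * X * G) * (H * Y * G) = H * (X * Y) * G := by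
    intro X Y
    calc (H * X * G) * (H * Y * G) = H * X * (G * H) * (Y * G) := by noncomm_ring
      _ = _ := by rw [hGH]; noncomm_ring
  have hcon : ∀ e : k, H * algebraMap k _ e * G = algebraMap k _ e := by
    intro e
    rw [← Algebra.commutes, mul_assoc, hHG, mul_one]
  obtain ⟨φ, hφu, hφv⟩ := exists_quat_hom hu hv huv bQ hbQ (H * U0 * G) (H * V0 * G)
    (by rw [hmul, hU0, hcon]) (by rw [hmul, hV0, hcon])
    (by rw [hmul, hmul, hUV0]; noncomm_ring)
  have hdσ : algebraMap k L (δk α / (2 * α)) * σ = δL σ := by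
    rw [map_div₀, ← hσd, map_mul, map_ofNat, ← hσ]
    field_simp
  have hdb : algebraMap k L (δk β / (2 * β)) = b' / (2 * b) := by
    rw [map_div₀, map_mul, map_ofNat, ← hb, ← hb']
  have hB1e : B1 = - (A2 * b) / (σ * σ) := by
    field_simp
    linear_combination hab
  obtain ⟨A1, hA1⟩ : ∃ e, e = algebraMap k L (δk α / (2 * α)) := ⟨_, rfl⟩
  rw [← hA1] at hdσ
  refine diffSplits_of hα hβ hu hv bQ hbQ huv hd hdk hL rkL φ ?_ ?_
  · have key : (δk α / (2 * α)) • U0 + a2 • V0 + a3 • (U0 * V0) = Δ U0 + U0 * M - M * U0 := by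
      simp only [smM, ← hA1, ← hA2, ← hA3]
      ext i j
      fin_cases i <;> fin_cases j <;>
        simp [U0, V0, M, Δ, hdσ, hL.zero', hL.neg', hn2, hn3] <;> field_simp <;> ring
    have h := hconj U0
    rw [← key] at h
    rw [hdu, hφu, show (H * U0 * G).map δL = _ from h]
    simp only [map_add, map_smul, map_mul, hφu, hφv, hmul]
    simp only [mul_add, add_mul, mul_smul_comm, smul_mul_assoc]
  · have key : b1 • U0 + (δk β / (2 * β)) • V0 + b3 • (U0 * V0) = Δ V0 + V0 * M - M * V0 := by
      simp only [smM, ← hB1, ← hB3, hdb]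
      ext i j
      fin_cases i <;> fin_cases j <;>
        simp [U0, V0, M, Δ, hβd, hL.zero', hL.one', hn1, hn3, hB1e] <;> field_simp <;> ring
    have h := hconj V0
    rw [← key] at h
    rw [hdv, hφv, show (H * V0 * G).map δL = _ from h]
    simp only [map_add, map_smul, map_mul, hφu, hφv, hmul]
    simp only [mul_add, add_mul, mul_smul_comm, smul_mul_assoc]
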